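/- (Slowest 1-periodic trajectory.) Let 𝒜 and ℬ be n×n matrices over the extended reals ℝ̄, let μ be a real number, and let x(0) ∈ ℝ̄^n be a min-plus eigenvector of ℬ, i.e. ℬ ⊗' x(0) = μ + x(0) (entrywise). Then the trajectory x(k) = ℬ^{k'} ⊗' x(0) (min-plus powers) satisfies the lower-bound constraints 𝒜 ⊗ x(k-1) ≤ x(k) for all k ≥ 1 if and only if (ℬ^♯ ⊗ 𝒜)* ⊗ x(0) = x(0) (i.e. x(0) lies in the image of (ℬ^♯ ⊗ 𝒜)*). -/

import Mathlib

/-!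
The constraint `𝒜 ⊗ x(0) ≤ x(1)` alone already says that `x(0)` is fixed by the Kleene star:
by residuation it reads `(ℬ^♯ ⊗ 𝒜) ⊗ x(0) ≤ x(0)`, and a point is the supremum of its iterates
under a monotone map `f` exactly when `f x ≤ x`. The other constraints follow from this one.
Scaling by `mu` commutes with `ℬ`, so `x(k)` is the `k`-fold scaling of `x(0)`, and
`a + mnAdd c x ≤ mnAdd c (a + x)` lets the scalings be pulled out of `𝒜 ⊗ x(k)`.

The opposite conventions for `∞ - ∞` in the two products are what make `-a + ·` left adjoint to
`mnAdd a` for infinite `a` too. The distributive laws, and hence the associativity of the matrix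
actions, are consequences of this adjunction.
-/

noncomputable section

/-- Max-plus matrix product over the extended reals (`-∞` is absorbing for `+` in `EReal`). -/
def mpMul {m n p : ℕ} (A : Matrix (Fin m) (Fin n) EReal) (B : Matrix (Fin n) (Fin p) EReal) :
    Matrix (Fin m) (Fin p) EReal :=
  fun i j => ⨆ k, A i k + B k j

/-- Max-plus matrix-vector product. -/
def mpMulVec {m n : ℕ} (A : Matrix (Fin m) (Fin n) EReal) (x : Fin n → EReal) :
    Fin m → EReal :=
  fun i => ⨆ k, A i k + x k

/-- Min-plus addition on `EReal`: `+∞` is absorbing. -/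
def mnAdd (a b : EReal) : EReal := -((-a) + (-b))

/-- Min-plus matrix product. -/
def mnMul {m n p : ℕ} (A : Matrix (Fin m) (Fin n) EReal) (B : Matrix (Fin n) (Fin p) EReal) :
    Matrix (Fin m) (Fin p) EReal :=
  fun i j => ⨅ k, mnAdd (A i k) (B k j)

/-- Min-plus matrix-vector product. -/
def mnMulVec {m n : ℕ} (A : Matrix (Fin m) (Fin n) EReal) (x : Fin n → EReal) :
    Fin m → EReal :=
  fun i => ⨅ k, mnAdd (A i k) (x k)

/-- Conjugate matrix: `(conj A) i j = -(A j i)`. -/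
def conjM {m n : ℕ} (A : Matrix (Fin m) (Fin n) EReal) : Matrix (Fin n) (Fin m) EReal :=
  fun i j => -(A j i)

/-- Max-plus identity matrix. -/
def mpId (n : ℕ) : Matrix (Fin n) (Fin n) EReal :=
  fun i j => if i = j then 0 else ⊥

/-- Min-plus identity matrix. -/
def mnId (n : ℕ) : Matrix (Fin n) (Fin n) EReal :=
  fun i j => if i = j then 0 else ⊤

/-- Max-plus matrix powers. -/
def mpPow {n : ℕ} (A : Matrix (Fin n) (Fin n) EReal) : ℕ → Matrix (Fin n) (Fin n) EReal
  | 0 => mpId n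
  | k + 1 => mpMul A (mpPow A k)

/-- Min-plus matrix powers. -/
def mnPow {n : ℕ} (A : Matrix (Fin n) (Fin n) EReal) : ℕ → Matrix (Fin n) (Fin n) EReal
  | 0 => mnId n
  | k + 1 => mnMul A (mnPow A k)

/-- Max-plus Kleene star: entrywise supremum of all max-plus powers. -/
def mpStar {n : ℕ} (A : Matrix (Fin n) (Fin n) EReal) : Matrix (Fin n) (Fin n) EReal :=
  fun i j => ⨆ k, mpPow A k i j

/-- Min-plus star: entrywise infimum of all min-plus powers. -/
def mnStar {n : ℕ} (A : Matrix (Fin n) (Fin n) EReal) : Matrix (Fin n) (Fin n) EReal :=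
  fun i j => ⨅ k, mnPow A k i j

/-- Entrywise maximum of two matrices (`A ⊕ B`). -/
def mSup {m n : ℕ} (A B : Matrix (Fin m) (Fin n) EReal) : Matrix (Fin m) (Fin n) EReal :=
  fun i j => A i j ⊔ B i j

/-- The scalar multiple `c ⊗' x` in the min-plus semimodule of vectors. The scalar may be infinite,
and `+∞` absorbs, so that every scaling commutes with every min-plus matrix. -/
def mnSMul {ι : Type*} (c : EReal) (x : ι → EReal) : ι → EReal :=
  fun i => mnAdd c (x i)

lemma mnAdd_comm (a b : EReal) : mnAdd a b = mnAdd b a := by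
  simp only [mnAdd, add_comm]

lemma mnAdd_assoc (a b c : EReal) : mnAdd (mnAdd a b) c = mnAdd a (mnAdd b c) := by
  simp only [mnAdd, neg_neg, add_assoc]

lemma mnAdd_left_comm (a b c : EReal) : mnAdd a (mnAdd b c) = mnAdd b (mnAdd a c) := by
  rw [← mnAdd_assoc, mnAdd_comm a b, mnAdd_assoc]

lemma mnAdd_coe_left (c : ℝ) (a : EReal) : mnAdd c a = c + a := by
  rw [mnAdd, EReal.neg_add (by simp) (by simp), neg_neg, sub_eq_add_neg, neg_neg]

lemma neg_add_le_iff_le_mnAdd (a y z : EReal) : -a + y ≤ z ↔ y ≤ mnAdd a z := by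
  rcases eq_or_ne y ⊥ with rfl | hy
  · simp
  rcases eq_or_ne z ⊤ with rfl | hz
  · simp [mnAdd]
  have hy' : -y ≠ ⊤ := by simpa using hy
  have hz' : -z ≠ ⊥ := by simpa using hz
  calc -a + y ≤ z ↔ -a ≤ z - y := (EReal.le_sub_iff_add_le (.inl hy) (.inr hz)).symm
    _ ↔ -a ≤ -y - -z := by rw [sub_eq_add_neg, sub_eq_add_neg, neg_neg, add_comm]
    _ ↔ -a + -z ≤ -y := EReal.le_sub_iff_add_le (.inl hz') (.inr hy')
    _ ↔ y ≤ mnAdd a z := EReal.le_neg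

lemma gc_neg_add_mnAdd (a : EReal) : GaloisConnection (-a + ·) (mnAdd a) :=
  neg_add_le_iff_le_mnAdd a

lemma mnAdd_mono_right (a : EReal) : Monotone (mnAdd a) :=
  (gc_neg_add_mnAdd a).monotone_u

lemma mnAdd_iInf {ι : Sort*} (a : EReal) (f : ι → EReal) :
    mnAdd a (⨅ k, f k) = ⨅ k, mnAdd a (f k) :=
  (gc_neg_add_mnAdd a).u_iInf

lemma iInf_mnAdd {ι : Sort*} (f : ι → EReal) (a : EReal) :
    mnAdd (⨅ k, f k) a = ⨅ k, mnAdd (f k) a := by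
  simp only [mnAdd_comm _ a, mnAdd_iInf]

lemma ereal_add_iSup {ι : Sort*} (a : EReal) (f : ι → EReal) :
    a + ⨆ k, f k = ⨆ k, a + f k := by
  simpa only [neg_neg] using (gc_neg_add_mnAdd (-a)).l_iSup (f := f)

lemma ereal_iSup_add {ι : Sort*} (f : ι → EReal) (a : EReal) :
    (⨆ k, f k) + a = ⨆ k, f k + a := by
  simp only [add_comm _ a, ereal_add_iSup]

lemma add_mnAdd_le (a c x : EReal) : a + mnAdd c x ≤ mnAdd c (a + x) := by
  rw [← neg_add_le_iff_le_mnAdd, add_left_comm]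
  exact add_le_add_right ((gc_neg_add_mnAdd c).l_u_le x) a

lemma mnSMul_mono {ι : Type*} (c : EReal) : Monotone (mnSMul (ι := ι) c) :=
  fun _ _ h i => mnAdd_mono_right c (h i)

section MatrixAction

variable {m n p : ℕ}

lemma mpMulVec_mono (A : Matrix (Fin m) (Fin n) EReal) : Monotone (mpMulVec A) :=
  fun _ _ h i => iSup_mono fun k => add_le_add_right (h k) (A i k)

lemma mpMulVec_mpMul (A : Matrix (Fin m) (Fin n) EReal) (B : Matrix (Fin n) (Fin p) EReal)
    (x : Fin p → EReal) : mpMulVec (mpMul A B) x = mpMulVec A (mpMulVec B x) := by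
  funext i
  simp only [mpMulVec, mpMul, ereal_iSup_add, ereal_add_iSup, add_assoc]
  exact iSup_comm

lemma mnMulVec_mnMul (A : Matrix (Fin m) (Fin n) EReal) (B : Matrix (Fin n) (Fin p) EReal)
    (x : Fin p → EReal) : mnMulVec (mnMul A B) x = mnMulVec A (mnMulVec B x) := by
  funext i
  simp only [mnMulVec, mnMul, iInf_mnAdd, mnAdd_iInf, mnAdd_assoc]
  exact iInf_comm

lemma mpMulVec_mpId (x : Fin n → EReal) : mpMulVec (mpId n) x = x := by
  funext i
  have entry (k : Fin n) : mpId n i k + x k = if i = k then x k else ⊥ := by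
    split_ifs with h <;> simp [mpId, h]
  simp only [mpMulVec, entry, ← iSup_eq_if, iSup_iSup_eq_right]

lemma mnMulVec_mnId (x : Fin n → EReal) : mnMulVec (mnId n) x = x := by
  funext i
  have entry (k : Fin n) : mnAdd (mnId n i k) (x k) = if i = k then x k else ⊤ := by
    split_ifs with h <;> simp [mnId, mnAdd, h]
  simp only [mnMulVec, entry, ← iInf_eq_if, iInf_iInf_eq_right]

lemma mpMulVec_mpPow (A : Matrix (Fin n) (Fin n) EReal) (k : ℕ) (x : Fin n → EReal) :
    mpMulVec (mpPow A k) x = (mpMulVec A)^[k] x := by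
  induction k with
  | zero => exact mpMulVec_mpId x
  | succ k ih => rw [mpPow, mpMulVec_mpMul, ih, Function.iterate_succ_apply']

lemma mnMulVec_mnPow (A : Matrix (Fin n) (Fin n) EReal) (k : ℕ) (x : Fin n → EReal) :
    mnMulVec (mnPow A k) x = (mnMulVec A)^[k] x := by
  induction k with
  | zero => exact mnMulVec_mnId x
  | succ k ih => rw [mnPow, mnMulVec_mnMul, ih, Function.iterate_succ_apply']

lemma mpMulVec_mnSMul_le (A : Matrix (Fin m) (Fin n) EReal) (c : EReal) (x : Fin n → EReal) :
    mpMulVec A (mnSMul c x) ≤ mnSMul c (mpMulVec A x) :=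
  fun i => iSup_le fun k => calc
    A i k + mnAdd c (x k) ≤ mnAdd c (A i k + x k) := add_mnAdd_le _ _ _
    _ ≤ mnAdd c (mpMulVec A x i) := mnAdd_mono_right c (le_iSup (fun k => A i k + x k) k)

lemma mnMulVec_mnSMul (B : Matrix (Fin m) (Fin n) EReal) (c : EReal) (x : Fin n → EReal) :
    mnMulVec B (mnSMul c x) = mnSMul c (mnMulVec B x) := by
  funext i
  simp only [mnMulVec, mnSMul, mnAdd_iInf, mnAdd_left_comm c]

lemma mpMulVec_conjM_le_iff (B : Matrix (Fin m) (Fin n) EReal) (y : Fin m → EReal)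
    (x : Fin n → EReal) : mpMulVec (conjM B) y ≤ x ↔ y ≤ mnMulVec B x := by
  simp only [Pi.le_def, mpMulVec, mnMulVec, conjM, iSup_le_iff, le_iInf_iff,
    neg_add_le_iff_le_mnAdd]
  exact forall_comm

end MatrixAction

lemma iSup_iterate_eq_self_iff {α : Type*} [CompleteLattice α] {f : α → α} (hf : Monotone f)
    {x : α} : ⨆ k, f^[k] x = x ↔ f x ≤ x := by
  refine ⟨fun h => ?_, fun h => le_antisymm (iSup_le fun k => ?_) ?_⟩
  · exact (le_iSup (fun k => f^[k] x) 1).trans_eq h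
  · exact hf.antitone_iterate_of_map_le h k.zero_le
  · exact le_iSup (fun k => f^[k] x) 0

lemma mpMulVec_mpStar {n : ℕ} (M : Matrix (Fin n) (Fin n) EReal) (x : Fin n → EReal) :
    mpMulVec (mpStar M) x = ⨆ k, (mpMulVec M)^[k] x := by
  funext i
  simp only [iSup_apply, ← mpMulVec_mpPow, mpMulVec, mpStar, ereal_iSup_add]
  exact iSup_comm

lemma mpMulVec_mpStar_eq_self_iff {n : ℕ} (M : Matrix (Fin n) (Fin n) EReal)
    (x : Fin n → EReal) : mpMulVec (mpStar M) x = x ↔ mpMulVec M x ≤ x := by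
  rw [mpMulVec_mpStar, iSup_iterate_eq_self_iff (mpMulVec_mono M)]

lemma iterate_mnMulVec_of_eigenvector {n : ℕ} {B : Matrix (Fin n) (Fin n) EReal} {mu : EReal}
    {x : Fin n → EReal} (hx : mnMulVec B x = mnSMul mu x) (k : ℕ) :
    (mnMulVec B)^[k] x = (mnSMul mu)^[k] x :=
  Function.Commute.iterate_eq_of_map_eq (mnMulVec_mnSMul B mu) k hx

lemma mpMulVec_iterate_mnSMul_le {m n : ℕ} (A : Matrix (Fin m) (Fin n) EReal) (c : EReal) (k : ℕ)
    (x : Fin n → EReal) : mpMulVec A ((mnSMul c)^[k] x) ≤ (mnSMul c)^[k] (mpMulVec A x) :=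
  (mnSMul_mono c).le_iterate_comp_of_le (h := mpMulVec A) (mpMulVec_mnSMul_le A c) k x

theorem slowest_one_periodic_general {n : ℕ} (𝒜 ℬ : Matrix (Fin n) (Fin n) EReal)
    (mu : EReal) (x0 : Fin n → EReal) (heig : mnMulVec ℬ x0 = mnSMul mu x0) :
    (∀ k : ℕ, 1 ≤ k →
        mpMulVec 𝒜 (mnMulVec (mnPow ℬ (k - 1)) x0) ≤ mnMulVec (mnPow ℬ k) x0) ↔
      mpMulVec (mpStar (mpMul (conjM ℬ) 𝒜)) x0 = x0 := by
  rw [mpMulVec_mpStar_eq_self_iff, mpMulVec_mpMul, mpMulVec_conjM_le_iff, heig]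
  simp only [mnMulVec_mnPow, iterate_mnMulVec_of_eigenvector heig]
  refine ⟨fun h => h 1 le_rfl, fun h k hk => ?_⟩
  obtain ⟨j, rfl⟩ := Nat.exists_eq_add_of_le' hk
  calc mpMulVec 𝒜 ((mnSMul mu)^[j] x0)
    _ ≤ (mnSMul mu)^[j] (mpMulVec 𝒜 x0) := mpMulVec_iterate_mnSMul_le 𝒜 mu j x0
    _ ≤ (mnSMul mu)^[j] (mnSMul mu x0) := (mnSMul_mono mu).iterate j h
    _ = (mnSMul mu)^[j + 1] x0 := (Function.iterate_succ_apply _ j x0).symm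

/-- slowest 1-periodic trajectory. -/
theorem slowest_one_periodic {n : ℕ} (𝒜 ℬ : Matrix (Fin n) (Fin n) EReal)
    (mu : ℝ) (x0 : Fin n → EReal)
    (heig : mnMulVec ℬ x0 = fun i => (mu : EReal) + x0 i) :
    (∀ k : ℕ, 1 ≤ k →
        mpMulVec 𝒜 (mnMulVec (mnPow ℬ (k - 1)) x0) ≤ mnMulVec (mnPow ℬ k) x0) ↔
      mpMulVec (mpStar (mpMul (conjM ℬ) 𝒜)) x0 = x0 :=
  slowest_one_periodic_general 𝒜 ℬ mu x0 <|
    heig.trans (funext fun i => (mnAdd_coe_left mu (x0 i)).symm)
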